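/- Let n ≥ 1, let H ∈ Mₙ(ℂ) be Hermitian, let σ₁, …, σ_L ∈ Mₙ(ℂ) with the index set {1,…,L} partitioned into disjoint subsets HD and PC, and let ρ = ψψ* ∈ Mₙ(ℂ) for a unit vector ψ ∈ ℂⁿ. Define the effective drift ℒ̃ρ = −i[H, ρ] + Σ_{l=1}^L (σ_l ρ σ_l* − ½{σ_l* σ_l, ρ}) − Σ_{l∈PC} (σ_l ρ σ_l* − tr(σ_l ρ σ_l*)·ρ) and, for l ∈ HD, 𝒢_l ρ = σ_l ρ + ρ σ_l* − tr(σ_l ρ + ρ σ_l*)·ρ. Then 2·tr(ρ · ℒ̃ρ) + Σ_{l∈HD} tr((𝒢_l ρ)²) = 0. -/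

import Mathlib

open Matrix BigOperators

/-!
At a pure state `ρ = ψψ*` every compression `ρ A ρ` is the scalar multiple `tr(Aρ) ρ`. The
contribution of a channel `σ` to the drift of `tr(ρ²)` is therefore governed by a single number,
the covariance `tr(σ*σρ) - tr(σ*ρ) tr(σρ)` of `σ*` and `σ`: paired with `ρ`, both the dissipator
and the compensated jump give minus this covariance, while the squared innovation has trace twice
the covariance, because centering `σ` turns the innovation into `σρ + ρσ*` with `ρσρ = 0`. Hence the
photon-counting channels cancel inside the effective drift, and the homodyne channels cancel against
their innovations.
-/

section Superoperators

variable {n R : Type*} [Fintype n] [CommRing R]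

/-- The Lindblad dissipator of a channel `S` at `ρ`. The adjoint of `S` is an independent
argument `T`, since `R` carries no involution; the same convention is used in
`compensatedJump` and `innovation`. -/
def dissipator [Invertible (2 : R)] (S T ρ : Matrix n n R) : Matrix n n R :=
  S * ρ * T - (⅟2 : R) • (T * S * ρ + ρ * (T * S))

/-- The drift correction of a photon-counting channel `S` with adjoint `T`: the unnormalized
post-jump state, recentered so as to be traceless when `ρ` has trace one. -/
def compensatedJump (S T ρ : Matrix n n R) : Matrix n n R :=
  S * ρ * T - trace (S * ρ * T) • ρ

/-- The diffusion coefficient `𝒢` of a homodyne channel `S` with adjoint `T`. -/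
def innovation (S T ρ : Matrix n n R) : Matrix n n R :=
  S * ρ + ρ * T - trace (S * ρ + ρ * T) • ρ

/-- The covariance of the observables `A` and `B`, in this operator order, in the state `ρ`. -/
def covariance (ρ A B : Matrix n n R) : R :=
  trace (A * B * ρ) - trace (A * ρ) * trace (B * ρ)

/-- The observable `A` minus its expectation in the state `ρ`. -/
def centered [DecidableEq n] (ρ A : Matrix n n R) : Matrix n n R :=
  A - trace (A * ρ) • 1

theorem innovation_eq_centered [DecidableEq n] (S T ρ : Matrix n n R) :
    innovation S T ρ = centered ρ S * ρ + ρ * centered ρ T := by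
  simp only [innovation, centered, sub_mul, mul_sub, Matrix.smul_mul, Matrix.mul_smul, one_mul,
    mul_one, trace_add, add_smul, trace_mul_comm ρ T]
  abel

theorem trace_centered_mul_centered [DecidableEq n] {ρ : Matrix n n R} (hρ : trace ρ = 1)
    (A B : Matrix n n R) :
    trace (centered ρ A * centered ρ B * ρ) = covariance ρ A B := by
  simp only [centered, covariance, sub_mul, mul_sub, Matrix.smul_mul, Matrix.mul_smul, one_mul,
    mul_one, trace_sub, trace_smul, smul_eq_mul, hρ]
  ring

theorem trace_mul_lie_self (A B : Matrix n n R) : trace (A * ⁅B, A⁆) = 0 := by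
  rw [Ring.lie_def, mul_sub, trace_sub, ← mul_assoc, trace_mul_comm (A * B), sub_self]

end Superoperators

/-- Idempotent matrices of rank one, the algebraic form of pure states, encoded by the trace and by
the fact that the compression of any matrix is a scalar. Over a field they are the matrices
`vecMulVec u v` with `v ⬝ᵥ u = 1`. -/
structure IsRankOneIdempotent {n R : Type*} [Fintype n] [CommRing R] (ρ : Matrix n n R) :
    Prop where
  trace_eq_one : trace ρ = 1
  mul_mul_self (A : Matrix n n R) : ρ * A * ρ = trace (A * ρ) • ρ

theorem isRankOneIdempotent_vecMulVec {n R : Type*} [Fintype n] [CommRing R] {u v : n → R}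
    (h : v ⬝ᵥ u = 1) : IsRankOneIdempotent (vecMulVec u v) where
  trace_eq_one := by rw [trace_vecMulVec, dotProduct_comm, h]
  mul_mul_self A := by
    rw [vecMulVec_mul, vecMulVec_mul_vecMulVec, mul_vecMulVec, trace_vecMulVec,
      ← dotProduct_mulVec, dotProduct_comm (A *ᵥ u), vecMulVec_smul]

namespace IsRankOneIdempotent

variable {n R : Type*} [Fintype n] [CommRing R] {ρ : Matrix n n R}

theorem mul_self (hρ : IsRankOneIdempotent ρ) : ρ * ρ = ρ := by
  classical simpa [hρ.trace_eq_one] using hρ.mul_mul_self 1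

theorem mul_centered_mul [DecidableEq n] (hρ : IsRankOneIdempotent ρ) (A : Matrix n n R) :
    ρ * centered ρ A * ρ = 0 := by
  rw [centered, mul_sub, sub_mul, hρ.mul_mul_self, Matrix.mul_smul, mul_one, Matrix.smul_mul,
    hρ.mul_self, sub_self]

theorem trace_mul_sandwich (hρ : IsRankOneIdempotent ρ) (S T : Matrix n n R) :
    trace (ρ * (S * ρ * T)) = trace (T * ρ) * trace (S * ρ) := by
  rw [← mul_assoc, ← mul_assoc, hρ.mul_mul_self, Matrix.smul_mul, trace_smul, smul_eq_mul,
    trace_mul_comm ρ, mul_comm]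

theorem trace_mul_dissipator [Invertible (2 : R)] (hρ : IsRankOneIdempotent ρ)
    (S T : Matrix n n R) :
    trace (ρ * dissipator S T ρ) = -covariance ρ T S := by
  have left : trace (ρ * (T * S * ρ)) = trace (T * S * ρ) := by
    rw [trace_mul_comm, mul_assoc, hρ.mul_self]
  have right : trace (ρ * (ρ * (T * S))) = trace (T * S * ρ) := by
    rw [← mul_assoc, hρ.mul_self, trace_mul_comm]
  rw [dissipator, covariance, mul_sub, Matrix.mul_smul, mul_add, trace_sub, trace_smul, trace_add,
    hρ.trace_mul_sandwich, left, right, smul_eq_mul, ← two_mul, invOf_mul_cancel_left, neg_sub]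

theorem trace_mul_compensatedJump (hρ : IsRankOneIdempotent ρ) (S T : Matrix n n R) :
    trace (ρ * compensatedJump S T ρ) = -covariance ρ T S := by
  rw [compensatedJump, covariance, mul_sub, Matrix.mul_smul, hρ.mul_self, trace_sub, trace_smul,
    hρ.trace_mul_sandwich, hρ.trace_eq_one, smul_eq_mul, mul_one, trace_mul_cycle, neg_sub]

theorem trace_innovation_mul_self (hρ : IsRankOneIdempotent ρ) (S T : Matrix n n R) :
    trace (innovation S T ρ * innovation S T ρ) = 2 * covariance ρ T S := by
  classical
  let X := centered ρ S
  let Y := centered ρ T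
  have decomposition : innovation S T ρ = X * ρ + ρ * Y := innovation_eq_centered S T ρ
  have compress_X : ρ * X * ρ = 0 := hρ.mul_centered_mul S
  have compress_Y : ρ * Y * ρ = 0 := hρ.mul_centered_mul T
  have square : innovation S T ρ * innovation S T ρ = X * ρ * Y + ρ * (Y * X * ρ) :=
    calc innovation S T ρ * innovation S T ρ
        = X * (ρ * X * ρ) + X * (ρ * ρ) * Y + ρ * (Y * X * ρ) + ρ * Y * ρ * Y := by
          rw [decomposition]; noncomm_ring
      _ = X * ρ * Y + ρ * (Y * X * ρ) := by
          rw [compress_X, compress_Y, hρ.mul_self, mul_zero, zero_mul, zero_add, add_zero]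
  rw [square, trace_add, trace_mul_cycle X, trace_mul_comm ρ, mul_assoc (Y * X), hρ.mul_self,
    trace_centered_mul_centered hρ.trace_eq_one, two_mul]

end IsRankOneIdempotent

theorem purity_drift_vanishes_on_pure_states_general
    {n ι R : Type*} [Fintype n] [Fintype ι] [DecidableEq ι] [CommRing R] [Invertible (2 : R)]
    (K : Matrix n n R) (S T : ι → Matrix n n R)
    {HD PC : Finset ι} (hdisj : Disjoint HD PC) (hpart : HD ∪ PC = Finset.univ)
    {ρ : Matrix n n R} (hρ : IsRankOneIdempotent ρ) :
    2 * trace (ρ * (⁅K, ρ⁆ + ∑ l, dissipator (S l) (T l) ρ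
        - ∑ l ∈ PC, compensatedJump (S l) (T l) ρ))
      + ∑ l ∈ HD, trace (innovation (S l) (T l) ρ * innovation (S l) (T l) ρ) = 0 := by
  have drift : trace (ρ * (⁅K, ρ⁆ + ∑ l, dissipator (S l) (T l) ρ
      - ∑ l ∈ PC, compensatedJump (S l) (T l) ρ)) = -∑ l ∈ HD, covariance ρ (T l) (S l) := by
    simp only [mul_sub, mul_add, Finset.mul_sum, trace_sub, trace_add, trace_sum,
      trace_mul_lie_self, hρ.trace_mul_dissipator, hρ.trace_mul_compensatedJump]
    rw [← hpart, Finset.sum_union hdisj, zero_add, add_sub_cancel_right, Finset.sum_neg_distrib]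
  simp only [drift, hρ.trace_innovation_mul_self, ← Finset.mul_sum]
  ring

/-- The full Itô drift of tr(ρ_t²) vanishes on pure states:
2·tr(ρ · ℒ̃ρ) + Σ_{l∈HD} tr((𝒢_l ρ)²) = 0, where ℒ̃ is the effective drift of the
quantum filtering equation and 𝒢_l are the homodyne-detection innovation operators. -/
theorem purity_drift_vanishes_on_pure_states
    (n L : ℕ) (hn : 1 ≤ n)
    (H : Matrix (Fin n) (Fin n) ℂ) (hH : H.IsHermitian)
    (σ : Fin L → Matrix (Fin n) (Fin n) ℂ)
    (HD PC : Finset (Fin L)) (hdisj : Disjoint HD PC) (hpart : HD ∪ PC = Finset.univ)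
    (ψ : Fin n → ℂ) (hψ : star ψ ⬝ᵥ ψ = 1) :
    let ρ : Matrix (Fin n) (Fin n) ℂ := vecMulVec ψ (star ψ)
    let Ltilde : Matrix (Fin n) (Fin n) ℂ :=
      -(Complex.I) • (H * ρ - ρ * H)
        + ∑ l, (σ l * ρ * (σ l)ᴴ
            - (1 / 2 : ℂ) • ((σ l)ᴴ * σ l * ρ + ρ * ((σ l)ᴴ * σ l)))
        - ∑ l ∈ PC, (σ l * ρ * (σ l)ᴴ - (Matrix.trace (σ l * ρ * (σ l)ᴴ)) • ρ)
    let G : Fin L → Matrix (Fin n) (Fin n) ℂ := fun l =>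
      σ l * ρ + ρ * (σ l)ᴴ - (Matrix.trace (σ l * ρ + ρ * (σ l)ᴴ)) • ρ
    2 * Matrix.trace (ρ * Ltilde) + ∑ l ∈ HD, Matrix.trace (G l * G l) = 0 := by
  simpa only [dissipator, compensatedJump, innovation, Ring.lie_def, Matrix.smul_mul,
    Matrix.mul_smul, ← smul_sub, invOf_eq_inv, ← one_div] using
    purity_drift_vanishes_on_pure_states_general (-Complex.I • H) σ (fun l ↦ (σ l)ᴴ) hdisj hpart
      (isRankOneIdempotent_vecMulVec hψ)
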